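/- arXiv:1512.08227 — 2 statements merged into one kernel-verified Lean document; each statement's English description precedes it below -/
import Mathlib

section
/- Let f : ℝ → ℝ be a positive 2π-periodic C¹ function with ∫₀^{2π} f(θ)cos θ dθ = 0 and ∫₀^{2π} f(θ)sin θ dθ = 0, and let φ : ℝ → ℝ be a 2π-periodic C¹ function with ∫₀^{2π} f(θ)φ(θ) dθ = 0. If ∫₀^{2π} φ(θ)² dθ = ∫₀^{2π} (φ'(θ))² dθ, then there exist real constants a, b such that φ(θ) = a cos θ + b sin θ for all θ. -/
open Real

/-!
Write `B(u, v) = ∫ (u' v' - u v)` over `[0, 2π]`. By Wirtinger's inequality `B(u, u) ≥ 0` for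
periodic `u` of mean zero, with equality only for combinations of `cos` and `sin`. Without the
condition on the mean `B` has one negative direction, and `f` provides it: since `f` is orthogonal
to `cos` and `sin`, the solution `h` of `h'' + h = f` with `h(0) = h'(0) = 0` closes up at `2π`, it
is positive where `f` is, and `B(v, h) = -∫ f v` for every `v`. Hence `B(h, h) = -∫ f h < 0` and
`B(φ, h) = 0`. Choosing `t` so that `φ - t h` has mean zero gives
`0 ≤ B(φ - t h, φ - t h) = B(φ, φ) + t² B(h, h)`; if `B(φ, φ) ≤ 0`, then `t = 0`, so `φ` itself has
mean zero and is an equality case of Wirtinger's inequality.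
-/

open MeasureTheory Set

section Wirtinger

variable {a b T : ℝ} {u u' : ℝ → ℂ}

theorem fourierCoeffOn_zero_eq_zero {E : Type*} [NormedAddCommGroup E] [NormedSpace ℂ E]
    {g : ℝ → E} (hab : a < b) (hmean : ∫ x in a..b, g x = 0) : fourierCoeffOn hab g 0 = 0 := by
  simp [fourierCoeffOn_eq_integral, hmean]

theorem fourierCoeffOn_deriv_eq_mul (hab : a < b) (hu : ContinuousOn u (Icc a b))
    (hderiv : ∀ x ∈ Ioo a b, HasDerivAt u (u' x) x) (hu' : IntervalIntegrable u' volume a b)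
    (hends : u a = u b) (n : ℤ) :
    fourierCoeffOn hab u' n = 2 * π * Complex.I * n / (b - a) * fourierCoeffOn hab u n := by
  have hlen : (b - a : ℂ) ≠ 0 := by exact_mod_cast (sub_pos.2 hab).ne'
  rcases eq_or_ne n 0 with rfl | hn
  · have hmean : ∫ x in a..b, u' x = 0 := by
      rw [intervalIntegral.integral_eq_sub_of_hasDerivAt_of_le hab.le hu hderiv hu', hends,
        sub_self]
    simp [fourierCoeffOn_zero_eq_zero hab hmean]
  · have hcoeff := fourierCoeffOn_of_hasDerivAt_Ioo hab hn (by rwa [uIcc_of_le hab.le])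
      (by rwa [min_eq_left hab.le, max_eq_right hab.le]) hu'
    have hn' : (n : ℂ) ≠ 0 := Int.cast_ne_zero.2 hn
    have hpi : (π : ℂ) ≠ 0 := Complex.ofReal_ne_zero.2 pi_ne_zero
    rw [hcoeff, hends]
    field_simp [Complex.I_ne_zero]
    ring

theorem norm_fourierCoeffOn_deriv_sq (hab : a < b) (hu : ContinuousOn u (Icc a b))
    (hderiv : ∀ x ∈ Ioo a b, HasDerivAt u (u' x) x) (hu' : IntervalIntegrable u' volume a b)
    (hends : u a = u b) (n : ℤ) :
    ((b - a) / (2 * π)) ^ 2 * ‖fourierCoeffOn hab u' n‖ ^ 2 =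
      (n : ℝ) ^ 2 * ‖fourierCoeffOn hab u n‖ ^ 2 := by
  have hlen : b - a ≠ 0 := (sub_pos.2 hab).ne'
  rw [fourierCoeffOn_deriv_eq_mul hab hu hderiv hu' hends, ← Complex.ofReal_sub]
  simp only [norm_mul, norm_div, Complex.norm_real, Complex.norm_I, Complex.norm_intCast,
    Complex.norm_ofNat, norm_eq_abs, mul_pow, div_pow, sq_abs]
  field_simp

theorem memLp_restrict_of_isCompact {X E : Type*} [TopologicalSpace X] [T2Space X]
    [MeasurableSpace X] [OpensMeasurableSpace X] [NormedAddCommGroup E] {μ : Measure X}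
    [IsFiniteMeasureOnCompacts μ] {K : Set X} {g : X → E} (hK : IsCompact K)
    (hg : ContinuousOn g K) (p : ENNReal) : MemLp g p (μ.restrict K) := by
  have : IsFiniteMeasure (μ.restrict K) := isFiniteMeasure_restrict.2 hK.measure_ne_top
  obtain ⟨C, hC⟩ := hK.exists_bound_of_continuousOn hg
  exact .of_bound (hg.aestronglyMeasurable_of_isCompact hK hK.measurableSet) C
    (ae_restrict_of_forall_mem hK.measurableSet hC)

theorem memLp_Ioc_of_continuousOn {E : Type*} [NormedAddCommGroup E] {g : ℝ → E}
    (hg : ContinuousOn g (Icc a b)) (p : ENNReal) : MemLp g p (volume.restrict (Ioc a b)) :=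
  (memLp_restrict_of_isCompact isCompact_Icc hg p).mono_measure
    (Measure.restrict_mono_set volume Ioc_subset_Icc_self)

theorem hasSum_sq_sub_one_mul_norm_fourierCoeffOn_sq (hab : a < b) (hu : ContinuousOn u (Icc a b))
    (hderiv : ∀ x ∈ Ioo a b, HasDerivAt u (u' x) x)
    (hu' : MemLp u' 2 (volume.restrict (Ioc a b))) (hends : u a = u b) :
    HasSum (fun n : ℤ => ((n : ℝ) ^ 2 - 1) * ‖fourierCoeffOn hab u n‖ ^ 2)
      ((b - a)⁻¹ * (((b - a) / (2 * π)) ^ 2 * (∫ x in a..b, ‖u' x‖ ^ 2) -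
        ∫ x in a..b, ‖u x‖ ^ 2)) := by
  have hint : IntervalIntegrable u' volume a b :=
    (intervalIntegrable_iff_integrableOn_Ioc_of_le hab.le).2 (hu'.integrable one_le_two)
  have hparseval := ((hasSum_sq_fourierCoeffOn hab hu').mul_left (((b - a) / (2 * π)) ^ 2)).sub
    (hasSum_sq_fourierCoeffOn hab (memLp_Ioc_of_continuousOn hu 2))
  simp only [norm_fourierCoeffOn_deriv_sq hab hu hderiv hint hends, smul_eq_mul] at hparseval
  convert! hparseval using 1
  · ext n
    ring
  · ring

theorem sq_sub_one_mul_norm_fourierCoeffOn_sq_nonneg (hab : a < b) (hmean : ∫ x in a..b, u x = 0)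
    (n : ℤ) : 0 ≤ ((n : ℝ) ^ 2 - 1) * ‖fourierCoeffOn hab u n‖ ^ 2 := by
  rcases eq_or_ne n 0 with rfl | hn
  · simp [fourierCoeffOn_zero_eq_zero hab hmean]
  · have hsq : (1 : ℝ) ≤ (n : ℝ) ^ 2 := by
      exact_mod_cast Int.add_one_le_iff.2 (sq_pos_of_ne_zero hn)
    exact mul_nonneg (sub_nonneg.2 hsq) (sq_nonneg _)

theorem wirtinger_inequality (hab : a < b) (hu : ContinuousOn u (Icc a b))
    (hderiv : ∀ x ∈ Ioo a b, HasDerivAt u (u' x) x)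
    (hu' : MemLp u' 2 (volume.restrict (Ioc a b))) (hends : u a = u b)
    (hmean : ∫ x in a..b, u x = 0) :
    ∫ x in a..b, ‖u x‖ ^ 2 ≤ ((b - a) / (2 * π)) ^ 2 * ∫ x in a..b, ‖u' x‖ ^ 2 := by
  have hsum := hasSum_sq_sub_one_mul_norm_fourierCoeffOn_sq hab hu hderiv hu' hends
  have hnonneg := hsum.nonneg (sq_sub_one_mul_norm_fourierCoeffOn_sq_nonneg hab hmean)
  exact sub_nonneg.1 (nonneg_of_mul_nonneg_right hnonneg (inv_pos.2 (sub_pos.2 hab)))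

theorem fourierCoeffOn_eq_zero_of_wirtinger_equality (hab : a < b) (hu : ContinuousOn u (Icc a b))
    (hderiv : ∀ x ∈ Ioo a b, HasDerivAt u (u' x) x)
    (hu' : MemLp u' 2 (volume.restrict (Ioc a b))) (hends : u a = u b)
    (hmean : ∫ x in a..b, u x = 0)
    (heq : ∫ x in a..b, ‖u x‖ ^ 2 = ((b - a) / (2 * π)) ^ 2 * ∫ x in a..b, ‖u' x‖ ^ 2)
    {n : ℤ} (hn : n ∉ ({1, -1} : Finset ℤ)) : fourierCoeffOn hab u n = 0 := by
  have hsum := hasSum_sq_sub_one_mul_norm_fourierCoeffOn_sq hab hu hderiv hu' hends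
  rw [← heq, sub_self, mul_zero, hasSum_zero_iff_of_nonneg
    (sq_sub_one_mul_norm_fourierCoeffOn_sq_nonneg hab hmean)] at hsum
  have hsq : (n : ℝ) ^ 2 - 1 ≠ 0 := by
    rw [sub_ne_zero]
    norm_cast
    simpa [sq_eq_one_iff] using hn
  simpa [hsq] using congrFun hsum n

theorem eq_sum_fourier_of_fourierCoeff_eq_zero [Fact (0 < T)] (F : C(AddCircle T, ℂ))
    {s : Finset ℤ} (hs : ∀ n ∉ s, fourierCoeff F n = 0) :
    F = ∑ n ∈ s, fourierCoeff F n • fourier n :=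
  (hasSum_fourier_series_of_summable (summable_of_ne_finset_zero hs)).unique
    (hasSum_sum_of_ne_finset_zero fun n hn => by rw [hs n hn, zero_smul])

theorem eq_sum_fourier_of_periodic (hT : 0 < T) (hper : Function.Periodic u T)
    (hu : Continuous u) {s : Finset ℤ} (hs : ∀ n ∉ s, fourierCoeffOn hT u n = 0) (x : ℝ) :
    u x = ∑ n ∈ s, fourierCoeffOn hT u n * fourier n (x : AddCircle T) := by
  have : Fact (0 < T) := ⟨hT⟩
  let F : C(AddCircle T, ℂ) := ⟨hper.lift, continuous_coinduced_dom.2 hu⟩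
  have hF (y : ℝ) : F y = u y := rfl
  have hcoeff (n : ℤ) : fourierCoeff F n = fourierCoeffOn hT u n := by
    simp only [fourierCoeff_eq_intervalIntegral _ _ 0, fourierCoeffOn_eq_integral,
      fourier_coe_apply, zero_add, sub_zero, hF]
  have hsum := congrArg (· (x : AddCircle T))
    (eq_sum_fourier_of_fourierCoeff_eq_zero F (s := s) fun n hn => (hcoeff n).trans (hs n hn))
  simpa [hF, hcoeff] using hsum

theorem fourier_one_eq_cos_add_sin_mul_I (x : ℝ) :
    fourier 1 (x : AddCircle T) =
      Real.cos (2 * π * x / T) + Real.sin (2 * π * x / T) * Complex.I := by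
  rw [fourier_coe_apply, Complex.ofReal_cos, Complex.ofReal_sin, ← Complex.exp_mul_I]
  push_cast
  ring_nf

theorem exists_cos_sin_of_wirtinger_equality (hT : 0 < T) (hper : Function.Periodic u T)
    (hu : Continuous u) (hderiv : ∀ x ∈ Ioo 0 T, HasDerivAt u (u' x) x)
    (hu' : MemLp u' 2 (volume.restrict (Ioc 0 T))) (hmean : ∫ x in (0 : ℝ)..T, u x = 0)
    (heq : ∫ x in (0 : ℝ)..T, ‖u x‖ ^ 2 =
      (T / (2 * π)) ^ 2 * ∫ x in (0 : ℝ)..T, ‖u' x‖ ^ 2) :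
    ∃ A B : ℂ, ∀ x : ℝ, u x = A * Real.cos (2 * π * x / T) + B * Real.sin (2 * π * x / T) := by
  have hzero : ∀ n ∉ ({1, -1} : Finset ℤ), fourierCoeffOn hT u n = 0 := fun n hn =>
    fourierCoeffOn_eq_zero_of_wirtinger_equality hT hu.continuousOn hderiv hu'
      (by simpa using (hper 0).symm) hmean (by simpa using heq) hn
  refine ⟨fourierCoeffOn hT u 1 + fourierCoeffOn hT u (-1),
    Complex.I * (fourierCoeffOn hT u 1 - fourierCoeffOn hT u (-1)), fun x => ?_⟩
  rw [eq_sum_fourier_of_periodic hT hper hu hzero x, Finset.sum_pair (by decide), fourier_neg,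
    fourier_one_eq_cos_add_sin_mul_I]
  simp only [map_add, map_mul, Complex.conj_ofReal, Complex.conj_I]
  ring

end Wirtinger

section WirtingerForm

variable {u v : ℝ → ℝ}

/-- The symmetric bilinear form `∫ (u' v' - u v)` over one period `[0, 2π]`, whose quadratic form
is the deficit in Wirtinger's inequality. It is meant for continuously differentiable functions, on
which neither `deriv` nor the integral takes a junk value. -/
noncomputable def wirtingerForm (u v : ℝ → ℝ) : ℝ :=
  ∫ x in (0 : ℝ)..2 * π, (deriv u x * deriv v x - u x * v x)

theorem wirtingerForm_self (hu : ContDiff ℝ 1 u) :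
    wirtingerForm u u =
      (∫ x in (0 : ℝ)..2 * π, deriv u x ^ 2) - ∫ x in (0 : ℝ)..2 * π, u x ^ 2 := by
  have hu' := hu.continuous_deriv_one
  simp only [wirtingerForm, ← sq]
  exact intervalIntegral.integral_sub ((hu'.pow 2).intervalIntegrable _ _)
    ((hu.continuous.pow 2).intervalIntegrable _ _)

theorem wirtingerForm_sub_const_mul_self (hu : ContDiff ℝ 1 u) (hv : ContDiff ℝ 1 v) (t : ℝ) :
    wirtingerForm (fun x => u x - t * v x) (fun x => u x - t * v x) =
      wirtingerForm u u - 2 * t * wirtingerForm u v + t ^ 2 * wirtingerForm v v := by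
  have hderiv (x : ℝ) : deriv (fun y => u y - t * v y) x = deriv u x - t * deriv v x :=
    ((hu.differentiable_one x).hasDerivAt.sub
      ((hv.differentiable_one x).hasDerivAt.const_mul t)).deriv
  simp only [wirtingerForm, hderiv, ← intervalIntegral.integral_const_mul]
  rw [← intervalIntegral.integral_sub, ← intervalIntegral.integral_add]
  · congr with x
    ring
  all_goals exact Continuous.intervalIntegrable (by fun_prop) _ _

theorem wirtingerForm_self_nonneg (hu : ContDiff ℝ 1 u) (hends : u 0 = u (2 * π))
    (hmean : ∫ x in (0 : ℝ)..2 * π, u x = 0) : 0 ≤ wirtingerForm u u := by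
  have hcu := hu.continuous
  have h := wirtinger_inequality two_pi_pos (u := fun x => (u x : ℂ)) (by fun_prop)
    (fun x _ => (hu.differentiable_one x).hasDerivAt.ofReal_comp)
    (memLp_Ioc_of_continuousOn (by fun_prop) 2) (by rw [hends])
    (by rw [intervalIntegral.integral_ofReal, hmean, Complex.ofReal_zero])
  rw [wirtingerForm_self hu, sub_nonneg]
  simpa [two_pi_pos.ne'] using h

theorem integral_eq_zero_of_wirtingerForm_self_nonpos (hu : ContDiff ℝ 1 u) (hv : ContDiff ℝ 1 v)
    (hu_ends : u 0 = u (2 * π)) (hv_ends : v 0 = v (2 * π)) (hneg : wirtingerForm v v < 0)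
    (horth : wirtingerForm u v = 0) (hnonpos : wirtingerForm u u ≤ 0) :
    ∫ x in (0 : ℝ)..2 * π, u x = 0 := by
  have hv_mean : ∫ x in (0 : ℝ)..2 * π, v x ≠ 0 := fun hmean =>
    hneg.not_ge (wirtingerForm_self_nonneg hv hv_ends hmean)
  obtain ⟨t, ht⟩ : ∃ t, t * ∫ x in (0 : ℝ)..2 * π, v x = ∫ x in (0 : ℝ)..2 * π, u x :=
    ⟨_, div_mul_cancel₀ _ hv_mean⟩
  have hmean : ∫ x in (0 : ℝ)..2 * π, (u x - t * v x) = 0 := by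
    rw [intervalIntegral.integral_sub (hu.continuous.intervalIntegrable _ _)
      ((hv.continuous.const_mul t).intervalIntegrable _ _), intervalIntegral.integral_const_mul,
      ht, sub_self]
  have hform := wirtingerForm_self_nonneg (hu.sub (contDiff_const.mul hv))
    (by rw [hu_ends, hv_ends]) hmean
  rw [wirtingerForm_sub_const_mul_self hu hv, horth] at hform
  have ht_zero : t = 0 := by
    by_contra ht_ne
    linarith [mul_neg_of_pos_of_neg (sq_pos_of_ne_zero ht_ne) hneg]
  rw [← ht, ht_zero, zero_mul]

theorem exists_cos_sin_of_wirtingerForm_self_eq_zero (hu : ContDiff ℝ 1 u)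
    (hper : Function.Periodic u (2 * π)) (hmean : ∫ x in (0 : ℝ)..2 * π, u x = 0)
    (hzero : wirtingerForm u u = 0) :
    ∃ a b : ℝ, ∀ x, u x = a * Real.cos x + b * Real.sin x := by
  rw [wirtingerForm_self hu, sub_eq_zero] at hzero
  obtain ⟨A, B, hAB⟩ := exists_cos_sin_of_wirtinger_equality two_pi_pos
    (u := fun x => (u x : ℂ)) (fun x => congrArg _ (hper x)) (by fun_prop)
    (fun x _ => (hu.differentiable_one x).hasDerivAt.ofReal_comp)
    (memLp_Ioc_of_continuousOn (by fun_prop) 2)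
    (by rw [intervalIntegral.integral_ofReal, hmean, Complex.ofReal_zero])
    (by simpa [two_pi_pos.ne'] using hzero.symm)
  refine ⟨A.re, B.re, fun x => ?_⟩
  have hre := congrArg Complex.re (hAB x)
  rwa [mul_div_cancel_left₀ x two_pi_pos.ne', Complex.add_re, Complex.re_mul_ofReal,
    Complex.re_mul_ofReal, Complex.ofReal_re] at hre

end WirtingerForm

section SupportFunction

variable {f v : ℝ → ℝ} {x : ℝ}

/-- The solution of `h'' + h = f` with `h 0 = h' 0 = 0`, given by Duhamel's formula. When `f` is
positive and orthogonal to `cos` and `sin` on `[0, 2π]`, it is there the support function of the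
closed convex curve with radius of curvature `f`, translated so as to touch the origin. -/
noncomputable def supportFunction (f : ℝ → ℝ) (x : ℝ) : ℝ :=
  ∫ s in (0 : ℝ)..x, f s * Real.sin (x - s)

theorem integral_mul_sin_sub {a b : ℝ} (hf : IntervalIntegrable f volume a b) (x : ℝ) :
    ∫ s in a..b, f s * Real.sin (x - s) =
      Real.sin x * (∫ s in a..b, f s * Real.cos s) -
        Real.cos x * ∫ s in a..b, f s * Real.sin s := by
  simp only [← intervalIntegral.integral_const_mul]
  rw [← intervalIntegral.integral_sub]
  · congr with s
    rw [Real.sin_sub]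
    ring
  · exact (hf.mul_continuousOn continuous_cos.continuousOn).const_mul _
  · exact (hf.mul_continuousOn continuous_sin.continuousOn).const_mul _

theorem integral_mul_cos_sub {a b : ℝ} (hf : IntervalIntegrable f volume a b) (x : ℝ) :
    ∫ s in a..b, f s * Real.cos (x - s) =
      Real.cos x * (∫ s in a..b, f s * Real.cos s) +
        Real.sin x * ∫ s in a..b, f s * Real.sin s := by
  simpa only [add_sub_right_comm, Real.sin_add_pi_div_two, Real.cos_add_pi_div_two, neg_mul,
    sub_neg_eq_add] using integral_mul_sin_sub hf (x + π / 2)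

theorem hasDerivAt_integral_mul_sin_sub (hf : Continuous f) (a x : ℝ) :
    HasDerivAt (fun y => ∫ s in a..y, f s * Real.sin (y - s))
      (∫ s in a..x, f s * Real.cos (x - s)) x := by
  have hC : HasDerivAt (fun y => ∫ s in a..y, f s * Real.cos s) (f x * Real.cos x) x :=
    ((hf.mul continuous_cos).integral_hasStrictDerivAt a x).hasDerivAt
  have hS : HasDerivAt (fun y => ∫ s in a..y, f s * Real.sin s) (f x * Real.sin x) x :=
    ((hf.mul continuous_sin).integral_hasStrictDerivAt a x).hasDerivAt
  simp only [integral_mul_sin_sub (hf.intervalIntegrable _ _),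
    integral_mul_cos_sub (hf.intervalIntegrable _ _)]
  convert! ((Real.hasDerivAt_sin x).mul hC).sub ((Real.hasDerivAt_cos x).mul hS) using 1
  ring

theorem hasDerivAt_integral_mul_cos_sub (hf : Continuous f) (a x : ℝ) :
    HasDerivAt (fun y => ∫ s in a..y, f s * Real.cos (y - s))
      (f x - ∫ s in a..x, f s * Real.sin (x - s)) x := by
  have hC : HasDerivAt (fun y => ∫ s in a..y, f s * Real.cos s) (f x * Real.cos x) x :=
    ((hf.mul continuous_cos).integral_hasStrictDerivAt a x).hasDerivAt
  have hS : HasDerivAt (fun y => ∫ s in a..y, f s * Real.sin s) (f x * Real.sin x) x :=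
    ((hf.mul continuous_sin).integral_hasStrictDerivAt a x).hasDerivAt
  simp only [integral_mul_sin_sub (hf.intervalIntegrable _ _),
    integral_mul_cos_sub (hf.intervalIntegrable _ _)]
  convert! ((Real.hasDerivAt_cos x).mul hC).add ((Real.hasDerivAt_sin x).mul hS) using 1
  linear_combination (-f x) * Real.sin_sq_add_cos_sq x

theorem deriv_supportFunction (hf : Continuous f) :
    deriv (supportFunction f) = fun x => ∫ s in (0 : ℝ)..x, f s * Real.cos (x - s) :=
  funext fun x => (hasDerivAt_integral_mul_sin_sub hf 0 x).deriv

theorem hasDerivAt_deriv_supportFunction (hf : Continuous f) (x : ℝ) :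
    HasDerivAt (deriv (supportFunction f)) (f x - supportFunction f x) x := by
  rw [deriv_supportFunction hf]
  exact hasDerivAt_integral_mul_cos_sub hf 0 x

theorem contDiff_supportFunction (hf : Continuous f) : ContDiff ℝ 1 (supportFunction f) :=
  contDiff_one_iff_deriv.2
    ⟨fun x => (hasDerivAt_integral_mul_sin_sub hf 0 x).differentiableAt,
      continuous_iff_continuousAt.2 fun x =>
        (hasDerivAt_deriv_supportFunction hf x).continuousAt⟩

theorem supportFunction_zero : supportFunction f 0 = 0 :=
  intervalIntegral.integral_same

theorem deriv_supportFunction_zero (hf : Continuous f) : deriv (supportFunction f) 0 = 0 := by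
  simp [deriv_supportFunction hf]

theorem supportFunction_two_pi (hsin : ∫ s in (0 : ℝ)..2 * π, f s * Real.sin s = 0) :
    supportFunction f (2 * π) = 0 := by
  simp [supportFunction, hsin]

theorem deriv_supportFunction_two_pi (hf : Continuous f)
    (hcos : ∫ s in (0 : ℝ)..2 * π, f s * Real.cos s = 0) :
    deriv (supportFunction f) (2 * π) = 0 := by
  simp [deriv_supportFunction hf, hcos]

theorem integral_pos_of_nonneg_on_Ioo {a b c : ℝ} {g : ℝ → ℝ} (hab : a < b)
    (hg : ContinuousOn g (Icc a b)) (hnonneg : ∀ x ∈ Ioo a b, 0 ≤ g x) (hc : c ∈ Ioo a b)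
    (hgc : 0 < g c) : 0 < ∫ x in a..b, g x := by
  have hnonneg_Icc : ∀ x ∈ Icc a b, 0 ≤ g x := by
    rw [← closure_Ioo hab.ne] at hg ⊢
    exact fun x hx => le_on_closure hnonneg continuousOn_const hg hx
  exact intervalIntegral.integral_pos hab hg (fun x hx => hnonneg_Icc x (Ioc_subset_Icc_self hx))
    ⟨c, Ioo_subset_Icc_self hc, hgc⟩

theorem supportFunction_eq_integral_two_pi (hf : Continuous f)
    (hcos : ∫ s in (0 : ℝ)..2 * π, f s * Real.cos s = 0)
    (hsin : ∫ s in (0 : ℝ)..2 * π, f s * Real.sin s = 0) (x : ℝ) :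
    supportFunction f x = ∫ s in x..2 * π, f s * Real.sin (s - x) := by
  have hint (a b : ℝ) : IntervalIntegrable (fun s => f s * Real.sin (x - s)) volume a b :=
    Continuous.intervalIntegrable (by fun_prop) a b
  have htotal : ∫ s in (0 : ℝ)..2 * π, f s * Real.sin (x - s) = 0 := by
    rw [integral_mul_sin_sub (hf.intervalIntegrable _ _), hcos, hsin, mul_zero, mul_zero, sub_zero]
  have hflip (s : ℝ) : f s * Real.sin (s - x) = -(f s * Real.sin (x - s)) := by
    rw [← neg_sub x s, Real.sin_neg, mul_neg]
  simp only [hflip, intervalIntegral.integral_neg]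
  rw [← intervalIntegral.integral_add_adjacent_intervals (hint 0 x) (hint x _)] at htotal
  exact eq_neg_of_add_eq_zero_left htotal

-- The kernel `sin (x - s)` is positive on the whole of `(0, x)` only when `x ≤ π`; beyond `π` the
-- orthogonality to `cos` and `sin` lets one integrate over `(x, 2π)` instead.
theorem supportFunction_pos (hf : Continuous f) (hnonneg : ∀ s ∈ Ioo 0 (2 * π), 0 ≤ f s)
    (hcos : ∫ s in (0 : ℝ)..2 * π, f s * Real.cos s = 0)
    (hsin : ∫ s in (0 : ℝ)..2 * π, f s * Real.sin s = 0) (hx : x ∈ Ioo 0 (2 * π))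
    (hfx : 0 < f x) : 0 < supportFunction f x := by
  have hopen : IsOpen {s | 0 < f s} := isOpen_lt continuous_const hf
  rcases le_total x π with hxπ | hπx
  · have hclosure : x ∈ closure (Ioo 0 x) := by
      rw [closure_Ioo hx.1.ne]
      exact right_mem_Icc.2 hx.1.le
    obtain ⟨c, hfc, hc⟩ := mem_closure_iff.1 hclosure _ hopen hfx
    refine integral_pos_of_nonneg_on_Ioo hx.1 (by fun_prop) (fun s hs => ?_) hc ?_
    · exact mul_nonneg (hnonneg s ⟨hs.1, hs.2.trans hx.2⟩)
        (sin_nonneg_of_nonneg_of_le_pi (by linarith [hs.2]) (by linarith [hs.1]))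
    · exact mul_pos hfc (sin_pos_of_pos_of_lt_pi (by linarith [hc.2]) (by linarith [hc.1]))
  · have hclosure : x ∈ closure (Ioo x (2 * π)) := by
      rw [closure_Ioo hx.2.ne]
      exact left_mem_Icc.2 hx.2.le
    obtain ⟨c, hfc, hc⟩ := mem_closure_iff.1 hclosure _ hopen hfx
    rw [supportFunction_eq_integral_two_pi hf hcos hsin]
    refine integral_pos_of_nonneg_on_Ioo hx.2 (by fun_prop) (fun s hs => ?_) hc ?_
    · exact mul_nonneg (hnonneg s ⟨hx.1.trans hs.1, hs.2⟩)
        (sin_nonneg_of_nonneg_of_le_pi (by linarith [hs.1]) (by linarith [hs.2]))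
    · exact mul_pos hfc (sin_pos_of_pos_of_lt_pi (by linarith [hc.1]) (by linarith [hc.2]))

theorem wirtingerForm_supportFunction_right (hf : Continuous f)
    (hcos : ∫ s in (0 : ℝ)..2 * π, f s * Real.cos s = 0) (hv : ContDiff ℝ 1 v) :
    wirtingerForm v (supportFunction f) = -∫ x in (0 : ℝ)..2 * π, f x * v x := by
  have hv' := hv.continuous_deriv_one
  have hch := (contDiff_supportFunction hf).continuous
  have hh' := (contDiff_supportFunction hf).continuous_deriv_one
  have hparts : ∫ x in (0 : ℝ)..2 * π, (deriv v x * deriv (supportFunction f) x +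
      v x * (f x - supportFunction f x)) = 0 := by
    rw [intervalIntegral.integral_deriv_mul_eq_sub
      (fun x _ => (hv.differentiable_one x).hasDerivAt)
      (fun x _ => hasDerivAt_deriv_supportFunction hf x) (hv'.intervalIntegrable _ _)
      ((hf.sub hch).intervalIntegrable _ _), deriv_supportFunction_zero hf,
      deriv_supportFunction_two_pi hf hcos, mul_zero, mul_zero, sub_zero]
  rw [eq_neg_iff_add_eq_zero, wirtingerForm, ← intervalIntegral.integral_add]
  · rw [← hparts]
    congr with x
    ring
  all_goals exact Continuous.intervalIntegrable (by fun_prop) _ _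

theorem wirtingerForm_supportFunction_self_neg (hf : Continuous f)
    (hnonneg : ∀ s ∈ Ioo 0 (2 * π), 0 ≤ f s) (hpos : ∃ s ∈ Ioo 0 (2 * π), 0 < f s)
    (hcos : ∫ s in (0 : ℝ)..2 * π, f s * Real.cos s = 0)
    (hsin : ∫ s in (0 : ℝ)..2 * π, f s * Real.sin s = 0) :
    wirtingerForm (supportFunction f) (supportFunction f) < 0 := by
  have hh := contDiff_supportFunction hf
  have hh_pos {s : ℝ} (hs : s ∈ Ioo 0 (2 * π)) (hfs : 0 < f s) : 0 < f s * supportFunction f s :=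
    mul_pos hfs (supportFunction_pos hf hnonneg hcos hsin hs hfs)
  obtain ⟨c, hc, hfc⟩ := hpos
  rw [wirtingerForm_supportFunction_right hf hcos hh, neg_lt_zero]
  refine integral_pos_of_nonneg_on_Ioo two_pi_pos (hf.mul hh.continuous).continuousOn
    (fun s hs => ?_) hc (hh_pos hc hfc)
  rcases (hnonneg s hs).eq_or_lt with hfs | hfs
  · rw [← hfs, zero_mul]
  · exact (hh_pos hs hfs).le

end SupportFunction

theorem poincare_type_equality_case_on_circle_general {f φ : ℝ → ℝ} (hf : Continuous f)
    (hnonneg : ∀ θ ∈ Ioo 0 (2 * π), 0 ≤ f θ) (hpos : ∃ θ ∈ Ioo 0 (2 * π), 0 < f θ)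
    (hcos : ∫ θ in (0 : ℝ)..2 * π, f θ * Real.cos θ = 0)
    (hsin : ∫ θ in (0 : ℝ)..2 * π, f θ * Real.sin θ = 0)
    (hper : Function.Periodic φ (2 * π)) (hφ : ContDiff ℝ 1 φ)
    (horth : ∫ θ in (0 : ℝ)..2 * π, f θ * φ θ = 0)
    (hle : (∫ θ in (0 : ℝ)..2 * π, deriv φ θ ^ 2) ≤ ∫ θ in (0 : ℝ)..2 * π, φ θ ^ 2) :
    ∃ a b : ℝ, ∀ θ, φ θ = a * Real.cos θ + b * Real.sin θ := by
  have hends : φ 0 = φ (2 * π) := by simpa using (hper 0).symm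
  have hform : wirtingerForm φ φ ≤ 0 := by rwa [wirtingerForm_self hφ, sub_nonpos]
  have hmean : ∫ θ in (0 : ℝ)..2 * π, φ θ = 0 :=
    integral_eq_zero_of_wirtingerForm_self_nonpos hφ (contDiff_supportFunction hf) hends
      (by rw [supportFunction_zero, supportFunction_two_pi hsin])
      (wirtingerForm_supportFunction_self_neg hf hnonneg hpos hcos hsin)
      (by rw [wirtingerForm_supportFunction_right hf hcos hφ, horth, neg_zero]) hform
  exact exists_cos_sin_of_wirtingerForm_self_eq_zero hφ hper hmean
    (hform.antisymm (wirtingerForm_self_nonneg hφ hends hmean))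

theorem poincare_type_equality_case_on_circle
    (f φ : ℝ → ℝ)
    (hf_pos : ∀ θ, 0 < f θ)
    (hf_per : ∀ θ, f (θ + 2 * π) = f θ)
    (hf_C1 : ContDiff ℝ 1 f)
    (hf_cos : ∫ θ in (0:ℝ)..(2 * π), f θ * Real.cos θ = 0)
    (hf_sin : ∫ θ in (0:ℝ)..(2 * π), f θ * Real.sin θ = 0)
    (hφ_per : ∀ θ, φ (θ + 2 * π) = φ θ)
    (hφ_C1 : ContDiff ℝ 1 φ)
    (hfφ : ∫ θ in (0:ℝ)..(2 * π), f θ * φ θ = 0)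
    (heq : (∫ θ in (0:ℝ)..(2 * π), (φ θ) ^ 2) = ∫ θ in (0:ℝ)..(2 * π), (deriv φ θ) ^ 2) :
    ∃ a b : ℝ, ∀ θ, φ θ = a * Real.cos θ + b * Real.sin θ :=
  poincare_type_equality_case_on_circle_general hf_C1.continuous (fun θ _ => (hf_pos θ).le)
    ⟨π, ⟨pi_pos, by linarith [pi_pos]⟩, hf_pos π⟩ hf_cos hf_sin hφ_per hφ_C1 hfφ heq.ge
end

section
/- Let f : ℝ → ℝ be a positive 2π-periodic C¹ function with ∫₀^{2π} f(θ)cos θ dθ = 0 and ∫₀^{2π} f(θ)sin θ dθ = 0. Define its Fourier coefficients a₀ = (1/π)∫₀^{2π} f(θ) dθ, and for n ≥ 2, aₙ = (1/π)∫₀^{2π} f(θ)cos(nθ) dθ, bₙ = (1/π)∫₀^{2π} f(θ)sin(nθ) dθ. Then ∑_{n=2}^{∞} (aₙ² + bₙ²)/(n² − 1) ≤ a₀²/2. -/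
open Real

/-!
For `s ∈ [0, 2π]` the Fourier series of `(π - s) sin s` gives
`∑_{n ≥ 2} cos (n s) / (n² - 1) = 1/2 + (cos s) / 4 - (π - s) (sin s) / 2`,
and the last term is nonpositive because `sin` and `π - s` have the same sign there. Since
`(∫ f cos n)² + (∫ f sin n)² = ∬ f(x) f(θ) cos (n (x - θ))`, integrating the resulting upper bound
`1/2 + cos (x - θ) / 4` against `f(x) f(θ) ≥ 0` bounds the series by `(∫ f)² / 2`; the term
`cos (x - θ)` disappears because `f` is orthogonal to `cos` and `sin`.
-/

open MeasureTheory Set Filter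

section FourierSeries

theorem fourier_one_sub_fourier_neg_one {T : ℝ} (x : ℝ) :
    fourier 1 (x : AddCircle T) - fourier (-1) (x : AddCircle T)
      = 2 * Complex.I * sin (2 * π * x / T) := by
  simp only [fourier_coe_apply]
  rw [show 2 * (π : ℂ) * Complex.I * ((1 : ℤ) : ℂ) * x / T
      = ((2 * π * x / T : ℝ) : ℂ) * Complex.I by push_cast; ring,
    show 2 * (π : ℂ) * Complex.I * ((-1 : ℤ) : ℂ) * x / T
      = ((-(2 * π * x / T) : ℝ) : ℂ) * Complex.I by push_cast; ring,
    Complex.exp_mul_I, Complex.exp_mul_I]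
  push_cast
  rw [Complex.cos_neg, Complex.sin_neg]
  ring

theorem fourier_add_fourier_neg {T : ℝ} (n : ℤ) (x : ℝ) :
    fourier n (x : AddCircle T) + fourier (-n) (x : AddCircle T)
      = 2 * cos (2 * π * n * x / T) := by
  simp only [fourier_coe_apply]
  rw [Complex.ofReal_cos, Complex.two_cos]
  push_cast
  ring_nf

theorem fourierCoeffOn_mul_sin {a b : ℝ} (hab : a < b) {f : ℝ → ℂ}
    (hf : IntervalIntegrable f volume a b) (n : ℤ) :
    fourierCoeffOn hab (fun x ↦ f x * sin (2 * π * x / (b - a))) n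
      = (fourierCoeffOn hab f (n - 1) - fourierCoeffOn hab f (n + 1)) / (2 * Complex.I) := by
  have hfourier (m : ℤ) : IntervalIntegrable
      (fun x : ℝ ↦ fourier m (x : AddCircle (b - a)) • f x) volume a b := by
    refine hf.continuousOn_mul (Continuous.continuousOn ?_)
    exact (fourier m).continuous.comp (AddCircle.continuous_mk' _)
  have hshift (x : ℝ) : fourier (-n) (x : AddCircle (b - a)) • (f x * sin (2 * π * x / (b - a)))
      = (fourier (-(n - 1)) (x : AddCircle (b - a)) • f x
          - fourier (-(n + 1)) (x : AddCircle (b - a)) • f x) / (2 * Complex.I) := by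
    rw [eq_div_iff (by simp), neg_sub', neg_add, sub_neg_eq_add, fourier_add, fourier_add]
    simp only [smul_eq_mul]
    have := fourier_one_sub_fourier_neg_one (T := b - a) x
    push_cast at this ⊢
    linear_combination -fourier (-n) (x : AddCircle (b - a)) * f x * this
  simp only [fourierCoeffOn_eq_integral, hshift]
  rw [intervalIntegral.integral_div, intervalIntegral.integral_sub (hfourier _) (hfourier _),
    ← smul_sub, smul_div_assoc]

theorem hasSum_fourierCoeffOn {T : ℝ} (hT : 0 < T) {f : ℝ → ℂ} (hf : ContinuousOn f (Icc 0 T))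
    (hfT : f 0 = f T) (hsum : Summable (fourierCoeffOn hT f)) {x : ℝ} (hx : x ∈ Ico 0 T) :
    HasSum (fun n : ℤ ↦ fourierCoeffOn hT f n * fourier n (x : AddCircle T)) (f x) := by
  have : Fact (0 < T) := ⟨hT⟩
  let F : C(AddCircle T, ℂ) :=
    ⟨AddCircle.liftIco T 0 f, AddCircle.liftIco_zero_continuous hfT hf⟩
  have hcoeff : fourierCoeff F = fourierCoeffOn hT f := by
    ext n
    refine (fourierCoeff_liftIco_eq f n).trans ?_
    simp only [zero_add]
  have hFx : F x = f x := AddCircle.liftIco_coe_apply (by rwa [zero_add])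
  have hpointwise := has_pointwise_sum_fourier_series_of_summable (f := F) (hcoeff ▸ hsum) x
  rwa [hcoeff, hFx] at hpointwise

end FourierSeries

section Kernel

theorem one_le_natCast_add_two_sq_sub_one (n : ℕ) : 1 ≤ ((n + 2 : ℕ) : ℝ) ^ 2 - 1 := by
  push_cast
  nlinarith [n.cast_nonneg (α := ℝ)]

theorem summable_inv_natCast_add_two_sq_sub_one :
    Summable fun n : ℕ ↦ (((n + 2 : ℕ) : ℝ) ^ 2 - 1)⁻¹ := by
  refine .of_nonneg_of_le (fun n ↦ ?_) (fun n ↦ ?_)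
    ((summable_nat_add_iff 1).2 (Real.summable_nat_pow_inv.2 one_lt_two))
  · exact inv_nonneg.2 (zero_le_one.trans (one_le_natCast_add_two_sq_sub_one n))
  · gcongr
    push_cast
    nlinarith [n.cast_nonneg (α := ℝ)]

/- With `s = 2 * π * x`, this function is `(π - s) * sin s` up to the factor `-1 / (2 * π)`.
For `n = ±1` the convention `0⁻¹ = 0` gives the right coefficient. -/
theorem fourierCoeffOn_bernoulliFun_one_mul_sin (n : ℤ) :
    fourierCoeffOn zero_lt_one (fun x ↦ (bernoulliFun 1 x * sin (2 * π * x) : ℂ)) n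
      = ((((n : ℝ) - 1)⁻¹ - ((n : ℝ) + 1)⁻¹) / (4 * π) : ℝ) := by
  have hB : IntervalIntegrable (fun x ↦ (bernoulliFun 1 x : ℂ)) volume 0 1 :=
    (Complex.continuous_ofReal.comp (continuous_bernoulliFun 1)).intervalIntegrable _ _
  have hcoeff (m : ℤ) : fourierCoeffOn zero_lt_one (fun x ↦ (bernoulliFun 1 x : ℂ)) m
      = -(2 * π * Complex.I)⁻¹ * (m : ℂ)⁻¹ := by
    refine (bernoulliFourierCoeff_eq one_ne_zero m).trans ?_
    rw [pow_one, Nat.factorial_one, Nat.cast_one, neg_div, one_div, mul_inv, neg_mul]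
  have hsin := fourierCoeffOn_mul_sin zero_lt_one hB n
  simp only [sub_zero, div_one] at hsin
  rw [hsin, hcoeff, hcoeff]
  have hπ := Complex.ofReal_ne_zero.2 pi_ne_zero
  push_cast
  field_simp
  rw [Complex.I_sq]
  ring

theorem inv_sub_one_sub_inv_add_one_neg {K : Type*} [Field K] (x : K) :
    (-x - 1)⁻¹ - (-x + 1)⁻¹ = (x - 1)⁻¹ - (x + 1)⁻¹ := by
  rw [show -x - 1 = -(x + 1) by ring, show -x + 1 = -(x - 1) by ring, inv_neg, inv_neg]
  ring

theorem inv_sub_one_sub_inv_add_one_natCast_add_two (n : ℕ) :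
    (((n + 2 : ℕ) : ℝ) - 1)⁻¹ - (((n + 2 : ℕ) : ℝ) + 1)⁻¹ = 2 * (((n + 2 : ℕ) : ℝ) ^ 2 - 1)⁻¹ := by
  push_cast
  rw [show (n : ℝ) + 2 - 1 = n + 1 by ring,
    show ((n : ℝ) + 2) ^ 2 - 1 = (n + 1) * (n + 2 + 1) by ring]
  field_simp
  ring

theorem summable_inv_sub_one_sub_inv_add_one :
    Summable fun n : ℤ ↦ ((n : ℝ) - 1)⁻¹ - ((n : ℝ) + 1)⁻¹ := by
  have hnat : Summable fun n : ℕ ↦ ((n : ℝ) - 1)⁻¹ - ((n : ℝ) + 1)⁻¹ :=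
    (summable_nat_add_iff 2).1 <| (summable_inv_natCast_add_two_sq_sub_one.mul_left 2).congr
      fun n ↦ (inv_sub_one_sub_inv_add_one_natCast_add_two n).symm
  refine .of_nat_of_neg (mod_cast hnat) (hnat.congr fun n ↦ ?_)
  push_cast
  exact (inv_sub_one_sub_inv_add_one_neg (n : ℝ)).symm

theorem hasSum_fourier_bernoulliFun_one_mul_sin {x : ℝ} (hx : x ∈ Ico 0 1) :
    HasSum (fun n : ℤ ↦ ((((n : ℝ) - 1)⁻¹ - ((n : ℝ) + 1)⁻¹) / (4 * π) : ℝ) *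
      fourier n (x : AddCircle (1 : ℝ))) (bernoulliFun 1 x * sin (2 * π * x) : ℝ) := by
  rw [Complex.ofReal_mul]
  have hcont : Continuous fun x : ℝ ↦ (bernoulliFun 1 x * sin (2 * π * x) : ℂ) := by
    have := continuous_bernoulliFun 1
    fun_prop
  have hcoeff := funext fourierCoeffOn_bernoulliFun_one_mul_sin
  have hsum := Complex.summable_ofReal.2 (summable_inv_sub_one_sub_inv_add_one.div_const (4 * π))
  simpa only [hcoeff] using
    hasSum_fourierCoeffOn zero_lt_one hcont.continuousOn (by simp) (hcoeff ▸ hsum) hx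

theorem hasSum_inv_sub_one_sub_inv_add_one_mul_cos {s : ℝ} (hs : s ∈ Ico 0 (2 * π)) :
    HasSum (fun n : ℕ ↦ (((n : ℝ) - 1)⁻¹ - ((n : ℝ) + 1)⁻¹) * cos (n * s))
      (-1 - (π - s) * sin s) := by
  have hx : s / (2 * π) ∈ Ico 0 1 :=
    ⟨div_nonneg hs.1 two_pi_pos.le, (div_lt_one two_pi_pos).2 hs.2⟩
  have hscale : 2 * π * (s / (2 * π)) = s := mul_div_cancel₀ s two_pi_pos.ne'
  have hπ := Complex.ofReal_ne_zero.2 pi_ne_zero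
  rw [← Complex.hasSum_ofReal]
  convert! (hasSum_fourier_bernoulliFun_one_mul_sin hx).nat_add_neg.mul_left (2 * π : ℂ) using 1
  · funext n
    have hfourier := fourier_add_fourier_neg (T := 1) n (s / (2 * π))
    rw [div_one, mul_right_comm, hscale, mul_comm s] at hfourier
    rw [Int.cast_neg, inv_sub_one_sub_inv_add_one_neg, ← mul_add, hfourier]
    push_cast
    field_simp
    ring
  · rw [hscale, bernoulliFun_one, fourier_zero, Int.cast_zero]
    push_cast
    field_simp
    ring

theorem hasSum_cos_div_sq_sub_one {s : ℝ} (hs : s ∈ Ico 0 (2 * π)) :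
    HasSum (fun n : ℕ ↦ cos ((n + 2 : ℕ) * s) / (((n + 2 : ℕ) : ℝ) ^ 2 - 1))
      (1 / 2 + cos s / 4 - (π - s) * sin s / 2) := by
  have hcos := (hasSum_nat_add_iff' 2).2 (hasSum_inv_sub_one_sub_inv_add_one_mul_cos hs)
  convert! hcos.div_const 2 using 1
  · funext n
    rw [inv_sub_one_sub_inv_add_one_natCast_add_two]
    ring
  · rw [Finset.sum_range_succ, Finset.sum_range_one, Nat.cast_zero, Nat.cast_one, zero_mul,
      cos_zero]
    norm_num
    ring

theorem tsum_cos_div_sq_sub_one_le (s : ℝ) :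
    ∑' n : ℕ, cos ((n + 2 : ℕ) * s) / (((n + 2 : ℕ) : ℝ) ^ 2 - 1) ≤ 1 / 2 + cos s / 4 := by
  wlog hs : s ∈ Ico 0 (2 * π) generalizing s
  · have hmod := this (toIcoMod two_pi_pos 0 s) (by simpa using toIcoMod_mem_Ico two_pi_pos 0 s)
    have hcos (m : ℕ) : cos (m * toIcoMod two_pi_pos 0 s) = cos (m * s) := by
      rw [toIcoMod, zsmul_eq_mul, mul_sub]
      have := cos_sub_int_mul_two_pi (m * s) (m * toIcoDiv two_pi_pos 0 s)
      push_cast at this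
      rw [← this]
      ring_nf
    have hone := hcos 1
    simp only [Nat.cast_one, one_mul] at hone
    simpa only [hcos, hone] using hmod
  · rw [(hasSum_cos_div_sq_sub_one hs).tsum_eq]
    suffices 0 ≤ (π - s) * sin s by linarith
    rcases le_total s π with hsπ | hπs
    · exact mul_nonneg (sub_nonneg.2 hsπ) (sin_nonneg_of_nonneg_of_le_pi hs.1 hsπ)
    · refine mul_nonneg_of_nonpos_of_nonpos (sub_nonpos.2 hπs) ?_
      rw [← sin_sub_two_pi]
      exact sin_nonpos_of_nonpos_of_neg_pi_le (by linarith [hs.2]) (by linarith)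

theorem norm_cos_div_sq_sub_one_le (n : ℕ) (s : ℝ) :
    ‖cos s / (((n + 2 : ℕ) : ℝ) ^ 2 - 1)‖ ≤ (((n + 2 : ℕ) : ℝ) ^ 2 - 1)⁻¹ := by
  have hpos := zero_le_one.trans (one_le_natCast_add_two_sq_sub_one n)
  rw [norm_div, norm_eq_abs, norm_of_nonneg hpos, div_eq_mul_inv]
  exact mul_le_of_le_one_left (inv_nonneg.2 hpos) (abs_cos_le_one s)

end Kernel

section Integration

variable {α ι : Type*} [MeasurableSpace α] [Countable ι] {μ : Measure α} {f g : α → ℝ}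
  {u : ι → α → ℝ} {B : ι → ℝ}

theorem integrable_mul_cos (hf : Integrable f μ) (hg : AEStronglyMeasurable g μ) :
    Integrable (fun x ↦ f x * cos (g x)) μ :=
  hf.mul_bdd (continuous_cos.comp_aestronglyMeasurable hg) (ae_of_all _ fun _ ↦ abs_cos_le_one _)

theorem integrable_mul_sin (hf : Integrable f μ) (hg : AEStronglyMeasurable g μ) :
    Integrable (fun x ↦ f x * sin (g x)) μ :=
  hf.mul_bdd (continuous_sin.comp_aestronglyMeasurable hg) (ae_of_all _ fun _ ↦ abs_sin_le_one _)

theorem integrable_mul_tsum (hf : Integrable f μ) (hu : ∀ i, AEStronglyMeasurable (u i) μ)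
    (hB : Summable B) (huB : ∀ i x, ‖u i x‖ ≤ B i) :
    Integrable (fun x ↦ f x * ∑' i, u i x) μ := by
  have hsum (x : α) : HasSum (u · x) (∑' i, u i x) :=
    (hB.of_norm_bounded fun i ↦ huB i x).hasSum
  refine hf.mul_bdd (c := ∑' i, B i) ?_ (ae_of_all _ fun x ↦ ?_)
  · exact aestronglyMeasurable_of_tendsto_ae atTop
      (fun s : Finset ι ↦ Finset.aestronglyMeasurable_fun_sum s fun i _ ↦ hu i) (ae_of_all _ hsum)
  · exact tsum_of_norm_bounded hB.hasSum fun i ↦ huB i x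

theorem hasSum_integral_mul (hf : Integrable f μ) (hu : ∀ i, AEStronglyMeasurable (u i) μ)
    (hB : Summable B) (huB : ∀ i x, ‖u i x‖ ≤ B i) :
    HasSum (fun i ↦ ∫ x, f x * u i x ∂μ) (∫ x, f x * ∑' i, u i x ∂μ) := by
  refine hasSum_integral_of_dominated_convergence (fun i x ↦ ‖f x‖ * B i)
    (fun i ↦ hf.aestronglyMeasurable.mul (hu i)) (fun i ↦ ae_of_all _ fun x ↦ ?_)
    (ae_of_all _ fun x ↦ hB.mul_left _) ?_
    (ae_of_all _ fun x ↦ (hB.of_norm_bounded fun i ↦ huB i x).hasSum.mul_left _)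
  · rw [norm_mul]
    gcongr
    exact huB i x
  · simp only [tsum_mul_left]
    exact hf.norm.mul_const _

theorem tsum_integral_mul_le (hf : Integrable f μ) (hf_nonneg : 0 ≤ᵐ[μ] f)
    (hu : ∀ i, AEStronglyMeasurable (u i) μ) (hB : Summable B) (huB : ∀ i x, ‖u i x‖ ≤ B i)
    (hfg : Integrable (fun x ↦ f x * g x) μ) (hug : ∀ x, ∑' i, u i x ≤ g x) :
    ∑' i, ∫ x, f x * u i x ∂μ ≤ ∫ x, f x * g x ∂μ := by
  rw [(hasSum_integral_mul hf hu hB huB).tsum_eq]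
  refine integral_mono_ae (integrable_mul_tsum hf hu hB huB) hfg ?_
  filter_upwards [hf_nonneg] with x hx
  exact mul_le_mul_of_nonneg_left (hug x) hx

end Integration

section Convolution

variable {μ : Measure ℝ} {f : ℝ → ℝ}

theorem integral_mul_cos_sub_s4 (hf : Integrable f μ) (c x : ℝ) :
    ∫ θ, f θ * cos (c * (x - θ)) ∂μ
      = (cos (c * x) * ∫ θ, f θ * cos (c * θ) ∂μ) + sin (c * x) * ∫ θ, f θ * sin (c * θ) ∂μ := by
  rw [← integral_const_mul, ← integral_const_mul, ← integral_add]
  · refine integral_congr_ae (ae_of_all _ fun θ ↦ ?_)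
    simp only [mul_sub, cos_sub]
    ring
  · exact (integrable_mul_cos hf (by fun_prop)).const_mul _
  · exact (integrable_mul_sin hf (by fun_prop)).const_mul _

theorem integral_mul_integral_mul_cos_sub (hf : Integrable f μ) (c : ℝ) :
    ∫ x, f x * ∫ θ, f θ * cos (c * (x - θ)) ∂μ ∂μ
      = (∫ θ, f θ * cos (c * θ) ∂μ) ^ 2 + (∫ θ, f θ * sin (c * θ) ∂μ) ^ 2 := by
  simp only [integral_mul_cos_sub_s4 hf, mul_add, ← mul_assoc]
  rw [integral_add, integral_mul_const, integral_mul_const, sq, sq]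
  · exact (integrable_mul_cos hf (by fun_prop)).mul_const _
  · exact (integrable_mul_sin hf (by fun_prop)).mul_const _

theorem norm_integral_mul_cos_sub_div_le (hf : Integrable f μ) (n : ℕ) (x : ℝ) :
    ‖∫ θ, f θ * (cos ((n + 2 : ℕ) * (x - θ)) / (((n + 2 : ℕ) : ℝ) ^ 2 - 1)) ∂μ‖
      ≤ (∫ θ, ‖f θ‖ ∂μ) * (((n + 2 : ℕ) : ℝ) ^ 2 - 1)⁻¹ := by
  rw [← integral_mul_const]
  refine norm_integral_le_of_norm_le (hf.norm.mul_const _) (ae_of_all _ fun θ ↦ ?_)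
  rw [norm_mul]
  gcongr
  exact norm_cos_div_sq_sub_one_le n _

theorem tsum_integral_mul_cos_sub_div_le (hf : Integrable f μ) (hf_nonneg : 0 ≤ᵐ[μ] f)
    (hf_cos : ∫ θ, f θ * cos θ ∂μ = 0) (hf_sin : ∫ θ, f θ * sin θ ∂μ = 0) (x : ℝ) :
    ∑' n : ℕ, ∫ θ, f θ * (cos ((n + 2 : ℕ) * (x - θ)) / (((n + 2 : ℕ) : ℝ) ^ 2 - 1)) ∂μ
      ≤ (∫ θ, f θ ∂μ) / 2 := by
  have hcos : ∫ θ, f θ * cos (x - θ) ∂μ = 0 := by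
    simpa [hf_cos, hf_sin] using integral_mul_cos_sub_s4 hf 1 x
  have hint_cos : Integrable (fun θ ↦ f θ * (cos (x - θ) / 4)) μ := by
    simpa only [mul_div_assoc] using
      (integrable_mul_cos hf (g := (x - ·)) (by fun_prop)).div_const 4
  have hsplit : (fun θ ↦ f θ * (1 / 2 + cos (x - θ) / 4))
      = fun θ ↦ f θ * (1 / 2) + f θ * (cos (x - θ) / 4) := funext fun θ ↦ mul_add _ _ _
  calc
    _ ≤ ∫ θ, f θ * (1 / 2 + cos (x - θ) / 4) ∂μ :=
      tsum_integral_mul_le hf hf_nonneg (fun n ↦ by fun_prop)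
        summable_inv_natCast_add_two_sq_sub_one (fun n θ ↦ norm_cos_div_sq_sub_one_le n _)
        (hsplit ▸ (hf.mul_const _).add hint_cos) (fun θ ↦ tsum_cos_div_sq_sub_one_le (x - θ))
    _ = (∫ θ, f θ ∂μ) / 2 := by
      rw [hsplit, integral_add (hf.mul_const _) hint_cos, integral_mul_const]
      simp only [← mul_div_assoc, integral_div, hcos, zero_div, add_zero, mul_one]

end Convolution

theorem fourier_coefficient_inequality_general {μ : Measure ℝ} {f : ℝ → ℝ} (hf : Integrable f μ)
    (hf_nonneg : 0 ≤ᵐ[μ] f) (hf_cos : ∫ θ, f θ * cos θ ∂μ = 0)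
    (hf_sin : ∫ θ, f θ * sin θ ∂μ = 0) {c a₀ : ℝ} {a b : ℕ → ℝ} (ha₀ : a₀ = c * ∫ θ, f θ ∂μ)
    (ha : ∀ n, 2 ≤ n → a n = c * ∫ θ, f θ * cos (n * θ) ∂μ)
    (hb : ∀ n, 2 ≤ n → b n = c * ∫ θ, f θ * sin (n * θ) ∂μ) :
    Summable (fun n : ℕ ↦ (a (n + 2) ^ 2 + b (n + 2) ^ 2) / (((n + 2 : ℕ) : ℝ) ^ 2 - 1)) ∧
      ∑' n : ℕ, (a (n + 2) ^ 2 + b (n + 2) ^ 2) / (((n + 2 : ℕ) : ℝ) ^ 2 - 1) ≤ a₀ ^ 2 / 2 := by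
  let u (n : ℕ) (x : ℝ) : ℝ :=
    ∫ θ, f θ * (cos ((n + 2 : ℕ) * (x - θ)) / (((n + 2 : ℕ) : ℝ) ^ 2 - 1)) ∂μ
  have hu_eq (n : ℕ) (x : ℝ) :
      u n x = (∫ θ, f θ * cos ((n + 2 : ℕ) * (x - θ)) ∂μ) / (((n + 2 : ℕ) : ℝ) ^ 2 - 1) := by
    simp only [u, ← mul_div_assoc, integral_div]
  have hu_meas (n : ℕ) : AEStronglyMeasurable (u n) μ := by
    simp only [funext (hu_eq n), integral_mul_cos_sub_s4 hf]
    fun_prop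
  have hu_sum := summable_inv_natCast_add_two_sq_sub_one.mul_left (∫ θ, ‖f θ‖ ∂μ)
  have hu_norm := norm_integral_mul_cos_sub_div_le hf
  have hterm (n : ℕ) : (a (n + 2) ^ 2 + b (n + 2) ^ 2) / (((n + 2 : ℕ) : ℝ) ^ 2 - 1)
      = c ^ 2 * ∫ x, f x * u n x ∂μ := by
    simp only [hu_eq, ← mul_div_assoc, integral_div, integral_mul_integral_mul_cos_sub hf,
      ha _ (Nat.le_add_left 2 n), hb _ (Nat.le_add_left 2 n)]
    ring
  simp only [hterm, ha₀, tsum_mul_left]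
  refine ⟨(hasSum_integral_mul hf hu_meas hu_sum hu_norm).summable.mul_left _, ?_⟩
  calc
    _ ≤ c ^ 2 * ∫ x, f x * ((∫ θ, f θ ∂μ) / 2) ∂μ := by
      gcongr
      exact tsum_integral_mul_le hf hf_nonneg hu_meas hu_sum hu_norm (hf.mul_const _)
        (tsum_integral_mul_cos_sub_div_le hf hf_nonneg hf_cos hf_sin)
    _ = (c * ∫ θ, f θ ∂μ) ^ 2 / 2 := by
      rw [integral_mul_const]
      ring

theorem fourier_coefficient_inequality
    (f : ℝ → ℝ)
    (hf_pos : ∀ θ, 0 < f θ)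
    (hf_per : ∀ θ, f (θ + 2 * π) = f θ)
    (hf_C1 : ContDiff ℝ 1 f)
    (hf_cos : ∫ θ in (0:ℝ)..(2 * π), f θ * Real.cos θ = 0)
    (hf_sin : ∫ θ in (0:ℝ)..(2 * π), f θ * Real.sin θ = 0)
    (a₀ : ℝ) (a b : ℕ → ℝ)
    (ha₀ : a₀ = (1 / π) * ∫ θ in (0:ℝ)..(2 * π), f θ)
    (ha : ∀ n, 2 ≤ n → a n = (1 / π) * ∫ θ in (0:ℝ)..(2 * π), f θ * Real.cos (n * θ))
    (hb : ∀ n, 2 ≤ n → b n = (1 / π) * ∫ θ in (0:ℝ)..(2 * π), f θ * Real.sin (n * θ)) :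
    (∑' n : ℕ, ((a (n + 2)) ^ 2 + (b (n + 2)) ^ 2) / (((n + 2 : ℕ) : ℝ) ^ 2 - 1))
      ≤ a₀ ^ 2 / 2 := by
  simp only [intervalIntegral.integral_of_le two_pi_pos.le] at hf_cos hf_sin ha₀ ha hb
  exact (fourier_coefficient_inequality_general (hf_C1.continuous.intervalIntegrable _ _).1
    (ae_of_all _ fun θ ↦ (hf_pos θ).le) hf_cos hf_sin ha₀ ha hb).2
end
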